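/- Stationary distributions of convex combinations of stochastic matrices are stable: let K, d ≥ 1, let φ^1,…,φ^K and χ^1,…,χ^K be d×d row-stochastic matrices, let w, w' ∈ Δ(K), and let p, p' ∈ Δ(d) satisfy p = (Σ_{k=1}^K w_k φ^k)^T p and p' = (Σ_{k=1}^K w'_k χ^k)^T p'. Then ‖p − p'‖_1² ≤ 2 Σ_{k=1}^K w_k ‖(φ^k)^T p − (χ^k)^T p'‖_1² + 2 ‖w − w'‖_1². -/

import Mathlib

open Finset

/-- A vector lies in the probability simplex `Δ(n)`. -/
def InSimplex (n : ℕ) (p : Fin n → ℝ) : Prop :=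
  (∀ i, 0 ≤ p i) ∧ ∑ i, p i = 1

/-- A matrix is row-stochastic if every row lies in the simplex. -/
def RowStochastic {d : ℕ} (φ : Matrix (Fin d) (Fin d) ℝ) : Prop :=
  ∀ i, (∀ j, 0 ≤ φ i j) ∧ ∑ j, φ i j = 1

/-- Stationary distributions of convex combinations of stochastic matrices are
stable: if `p = (Σ_k w_k φ^k)^T p` and `p' = (Σ_k w'_k χ^k)^T p'`, then
`‖p − p'‖_1² ≤ 2 Σ_k w_k ‖(φ^k)^T p − (χ^k)^T p'‖_1² + 2 ‖w − w'‖_1²`. -/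
theorem stmt17 (K d : ℕ) (hK : 1 ≤ K) (hd : 1 ≤ d)
    (φ χ : Fin K → Matrix (Fin d) (Fin d) ℝ)
    (hφ : ∀ k, RowStochastic (φ k)) (hχ : ∀ k, RowStochastic (χ k))
    (w w' : Fin K → ℝ) (hw : InSimplex K w) (hw' : InSimplex K w')
    (p p' : Fin d → ℝ) (hp : InSimplex d p) (hp' : InSimplex d p')
    (hstat : ∀ i, p i = ∑ j, (∑ k, w k * φ k j i) * p j)
    (hstat' : ∀ i, p' i = ∑ j, (∑ k, w' k * χ k j i) * p' j) :
    (∑ i, |p i - p' i|) ^ 2 ≤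
      2 * (∑ k, w k * (∑ i, |(∑ j, φ k j i * p j) - ∑ j, χ k j i * p' j|) ^ 2) +
      2 * (∑ k, |w k - w' k|) ^ 2 := by
  have h1 : ∀ i, p i = ∑ k, w k * ∑ j, φ k j i * p j := by
    intro i
    rw [hstat i]
    simp only [Finset.sum_mul, Finset.mul_sum]
    rw [Finset.sum_comm]
    simp only [mul_assoc]
  have h2 : ∀ i, p' i = ∑ k, w' k * ∑ j, χ k j i * p' j := by
    intro i
    rw [hstat' i]
    simp only [Finset.sum_mul, Finset.mul_sum]
    rw [Finset.sum_comm]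
    simp only [mul_assoc]
  have hb0 : ∀ k i, 0 ≤ ∑ j, χ k j i * p' j := fun k i =>
    Finset.sum_nonneg fun j _ => mul_nonneg ((hχ k j).1 i) (hp'.1 j)
  have hb1 : ∀ k, ∑ i, ∑ j, χ k j i * p' j = 1 := by
    intro k
    rw [Finset.sum_comm]
    simp only [← Finset.sum_mul, (hχ k _).2, one_mul, hp'.2]
  generalize ha : (fun k i => ∑ j, φ k j i * p j) = a at *
  generalize hb : (fun k i => ∑ j, χ k j i * p' j) = b at *
  have ha' : ∀ k i, ∑ j, φ k j i * p j = a k i := fun k i => by rw [← ha]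
  have hb' : ∀ k i, ∑ j, χ k j i * p' j = b k i := fun k i => by rw [← hb]
  simp only [ha', hb'] at h1 h2 hb0 hb1 ⊢
  have key : ∑ i, |p i - p' i| ≤
      ∑ k, w k * (∑ i, |a k i - b k i|) + ∑ k, |w k - w' k| := by
    have e : ∀ i, |p i - p' i| ≤
        ∑ k, w k * |a k i - b k i| + ∑ k, |w k - w' k| * b k i := by
      intro i
      have : p i - p' i = ∑ k, w k * (a k i - b k i) + ∑ k, (w k - w' k) * b k i := by
        rw [h1 i, h2 i, ← Finset.sum_sub_distrib, ← Finset.sum_add_distrib]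
        exact Finset.sum_congr rfl fun k _ => by ring
      rw [this]
      refine (abs_add_le _ _).trans (add_le_add ?_ ?_)
      · refine (Finset.abs_sum_le_sum_abs _ _).trans (Finset.sum_le_sum fun k _ => ?_)
        rw [abs_mul, abs_of_nonneg (hw.1 k)]
      · refine (Finset.abs_sum_le_sum_abs _ _).trans (Finset.sum_le_sum fun k _ => ?_)
        rw [abs_mul, abs_of_nonneg (hb0 k i)]
    refine (Finset.sum_le_sum fun i _ => e i).trans (le_of_eq ?_)
    rw [Finset.sum_add_distrib, Finset.sum_comm]
    congr 1
    · simp only [Finset.mul_sum]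
    · rw [Finset.sum_comm]
      simp only [← Finset.mul_sum, hb1, mul_one]
  have jensen : (∑ k, w k * (∑ i, |a k i - b k i|)) ^ 2 ≤
      ∑ k, w k * (∑ i, |a k i - b k i|) ^ 2 :=
    Real.pow_arith_mean_le_arith_mean_pow_of_even _ _ _ (fun k _ => hw.1 k) hw.2 even_two
  have h0 : 0 ≤ ∑ i, |p i - p' i| := Finset.sum_nonneg fun _ _ => abs_nonneg _
  have h3 := pow_le_pow_left₀ h0 key 2
  nlinarith [sq_nonneg (∑ k, w k * (∑ i, |a k i - b k i|) - ∑ k, |w k - w' k|)]
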